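/- For sufficiently large ρ the following holds: if V ∈ 𝒱(r,n) with n ≤ d, ξ ∈ Ξ(V), and ν = ξ_{V^⊥} is the orthogonal projection of ξ onto V^⊥, then ξ + tν ∈ Ξ(V) for all t ≥ 0. -/

import Mathlib

noncomputable section

open Set Submodule Module MeasureTheory Relation
open scoped RealInnerProductSpace

variable {d : ℕ}

/-- The lattice Γ generated over ℤ by the basis `B` of ℝ^d. -/
def latticeOf (B : Basis (Fin d) ℝ (EuclideanSpace ℝ (Fin d))) :
    Submodule ℤ (EuclideanSpace ℝ (Fin d)) :=
  Submodule.span ℤ (Set.range B)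

/-- The determinant d(Γ) of the lattice generated by `B`. -/
def latDet (B : Basis (Fin d) ℝ (EuclideanSpace ℝ (Fin d))) : ℝ :=
  |(EuclideanSpace.basisFun (Fin d) ℝ).toBasis.det (fun i => B i)|

/-- The dual lattice Γ† = {θ : θ·g ∈ 2πℤ for all g ∈ Γ}. -/
def dualLattice (B : Basis (Fin d) ℝ (EuclideanSpace ℝ (Fin d))) :
    Set (EuclideanSpace ℝ (Fin d)) :=
  {θ | ∀ g ∈ latticeOf B, ∃ k : ℤ, ⟪θ, g⟫ = 2 * Real.pi * k}

/-- Θ_r : nonzero dual lattice vectors of norm at most r. -/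
def Theta (B : Basis (Fin d) ℝ (EuclideanSpace ℝ (Fin d))) (r : ℝ) :
    Set (EuclideanSpace ℝ (Fin d)) :=
  {θ | θ ∈ dualLattice B ∧ θ ≠ 0 ∧ ‖θ‖ ≤ r}

/-- Θ_r⁰ : dual lattice vectors of norm at most r (including 0). -/
def Theta0 (B : Basis (Fin d) ℝ (EuclideanSpace ℝ (Fin d))) (r : ℝ) :
    Set (EuclideanSpace ℝ (Fin d)) :=
  {θ | θ ∈ dualLattice B ∧ ‖θ‖ ≤ r}

/-- A lattice r-subspace: a subspace spanned by dual lattice vectors from Θ_r⁰. -/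
def IsLatticeSubspace (B : Basis (Fin d) ℝ (EuclideanSpace ℝ (Fin d))) (r : ℝ)
    (V : Submodule ℝ (EuclideanSpace ℝ (Fin d))) : Prop :=
  ∃ S : Set (EuclideanSpace ℝ (Fin d)), S ⊆ Theta0 B r ∧ V = Submodule.span ℝ S

/-- Orthogonal projection ξ_V onto a subspace, viewed in the ambient space. -/
def projV (V : Submodule ℝ (EuclideanSpace ℝ (Fin d))) (ξ : EuclideanSpace ℝ (Fin d)) :
    EuclideanSpace ℝ (Fin d) :=
  (orthogonalProjection V ξ : EuclideanSpace ℝ (Fin d))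

/-- ω_n: the volume of the unit ball in ℝ^n. -/
def unitBallVol (n : ℕ) : ℝ :=
  (MeasureTheory.volume (Metric.ball (0 : EuclideanSpace ℝ (Fin n)) 1)).toReal

/-- The resonant layer Λ(θ) (= ℝ^d when θ = 0). -/
def layer (ρ a : ℝ) (θ : EuclideanSpace ℝ (Fin d)) : Set (EuclideanSpace ℝ (Fin d)) :=
  {ξ | θ = 0 ∨ |⟪ξ, θ⟫| < ρ ^ a * ‖θ‖}

/-- Υ_θ(ξ): the points θ-resonant congruent to ξ. -/
def upsTheta (ρ a : ℝ) (θ ξ : EuclideanSpace ℝ (Fin d)) : Set (EuclideanSpace ℝ (Fin d)) :=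
  {η | ξ ∈ layer ρ a θ ∧ η ∈ layer ρ a θ ∧ ∃ l : ℤ, ξ - η = (l : ℝ) • θ}

/-- One step of resonant congruence (with some θ ∈ Θ_r⁰). -/
def resStep (B : Basis (Fin d) ℝ (EuclideanSpace ℝ (Fin d))) (ρ a r : ℝ)
    (ξ η : EuclideanSpace ℝ (Fin d)) : Prop :=
  ∃ θ ∈ Theta0 B r, η ∈ upsTheta ρ a θ ξ

/-- Υ(ξ): all points resonant congruent to ξ. -/
def Ups (B : Basis (Fin d) ℝ (EuclideanSpace ℝ (Fin d))) (ρ a r : ℝ)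
    (ξ : EuclideanSpace ℝ (Fin d)) : Set (EuclideanSpace ℝ (Fin d)) :=
  {η | Relation.ReflTransGen (resStep B ρ a r) ξ η}

/-- N(ξ) = Υ(ξ) − ξ. -/
def resN (B : Basis (Fin d) ℝ (EuclideanSpace ℝ (Fin d))) (ρ a r : ℝ)
    (ξ : EuclideanSpace ℝ (Fin d)) : Set (EuclideanSpace ℝ (Fin d)) :=
  {m | ξ + m ∈ Ups B ρ a r ξ}

/-- Ξ₁(V) = {ξ : |ξ_V| < ρ^{α_n}}, n = dim V. -/
def Xi1 (ρ : ℝ) (α : ℕ → ℝ) (V : Submodule ℝ (EuclideanSpace ℝ (Fin d))) :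
    Set (EuclideanSpace ℝ (Fin d)) :=
  {ξ | ‖projV V ξ‖ < ρ ^ α (Module.finrank ℝ V)}

/-- Ξ₂(V) = ∪_{ξ ∈ Ξ₁(V)} Υ(ξ). -/
def Xi2 (B : Basis (Fin d) ℝ (EuclideanSpace ℝ (Fin d))) (ρ r : ℝ) (α : ℕ → ℝ)
    (V : Submodule ℝ (EuclideanSpace ℝ (Fin d))) : Set (EuclideanSpace ℝ (Fin d)) :=
  {η | ∃ ξ ∈ Xi1 ρ α V, η ∈ Ups B ρ (α 1) r ξ}

/-- Ξ(V): Ξ₂(V) minus the Ξ₂(W) for all lattice r-subspaces W of larger dimension. -/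
def Xi (B : Basis (Fin d) ℝ (EuclideanSpace ℝ (Fin d))) (ρ r : ℝ) (α : ℕ → ℝ)
    (V : Submodule ℝ (EuclideanSpace ℝ (Fin d))) : Set (EuclideanSpace ℝ (Fin d)) :=
  Xi2 B ρ r α V \
    ⋃ W ∈ {W : Submodule ℝ (EuclideanSpace ℝ (Fin d)) |
        IsLatticeSubspace B r W ∧ Module.finrank ℝ V < Module.finrank ℝ W},
      Xi2 B ρ r α W

/-- The standing conditions on the parameters ρ ≥ 1, r, κ > 0 and the exponents α_j:
0 = α₀, α_{n+1} > α_n + 2κd², α_d < 1, r ≤ ρ^κ, and r ≥ r₀ (i.e. Θ_r⁰ spans ℝ^d). -/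
def GoodParams (B : Basis (Fin d) ℝ (EuclideanSpace ℝ (Fin d))) (ρ r κ : ℝ)
    (α : ℕ → ℝ) : Prop :=
  1 ≤ ρ ∧ 0 < κ ∧ α 0 = 0 ∧ (∀ n < d, α n + 2 * κ * (d : ℝ) ^ 2 < α (n + 1)) ∧
    α d < 1 ∧ r ≤ ρ ^ κ ∧ Submodule.span ℝ (Theta0 B r) = ⊤


/-! ### Orthogonal projections -/

theorem projV_eq_starProjection (V : Submodule ℝ (EuclideanSpace ℝ (Fin d)))
    (x : EuclideanSpace ℝ (Fin d)) : projV V x = V.starProjection x := rfl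

theorem projV_mem (V : Submodule ℝ (EuclideanSpace ℝ (Fin d)))
    (x : EuclideanSpace ℝ (Fin d)) : projV V x ∈ V :=
  V.starProjection_apply_mem x

theorem inner_projV_left {V : Submodule ℝ (EuclideanSpace ℝ (Fin d))}
    {u : EuclideanSpace ℝ (Fin d)} (hu : u ∈ V) (x : EuclideanSpace ℝ (Fin d)) :
    ⟪projV V x, u⟫ = ⟪x, u⟫ := by
  have h := V.starProjection_inner_eq_zero x u hu
  rw [inner_sub_left] at h
  rw [projV_eq_starProjection]
  linarith

theorem abs_inner_le_norm_projV {V : Submodule ℝ (EuclideanSpace ℝ (Fin d))}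
    {u : EuclideanSpace ℝ (Fin d)} (hu : u ∈ V) (x : EuclideanSpace ℝ (Fin d)) :
    |⟪x, u⟫| ≤ ‖projV V x‖ * ‖u‖ := by
  rw [← inner_projV_left hu x]
  exact abs_real_inner_le_norm _ _

theorem norm_projV_le_of_abs_inner_le {V : Submodule ℝ (EuclideanSpace ℝ (Fin d))}
    {x : EuclideanSpace ℝ (Fin d)} {M : ℝ} (hM : 0 ≤ M)
    (h : ∀ u ∈ V, |⟪x, u⟫| ≤ M * ‖u‖) : ‖projV V x‖ ≤ M := by
  have h1 := h _ (projV_mem V x)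
  rw [← inner_projV_left (projV_mem V x) x, real_inner_self_eq_norm_sq,
    abs_of_nonneg (by positivity)] at h1
  rcases (norm_nonneg (projV V x)).eq_or_lt with h0 | h0
  · rwa [← h0]
  · nlinarith

theorem norm_projV_le_add (V : Submodule ℝ (EuclideanSpace ℝ (Fin d)))
    (x y : EuclideanSpace ℝ (Fin d)) : ‖projV V x‖ ≤ ‖projV V y‖ + ‖x - y‖ := by
  have h : projV V x = projV V y + projV V (x - y) := by
    simp [projV_eq_starProjection]
  rw [h]
  exact (norm_add_le _ _).trans (by gcongr; exact V.norm_starProjection_apply_le _)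

/-- Moving away from `V` along the component orthogonal to `V` does not decrease projections onto
subspaces containing `V`. -/
theorem norm_projV_le_of_perp_ray {V W : Submodule ℝ (EuclideanSpace ℝ (Fin d))} (hVW : V ≤ W)
    (x : EuclideanSpace ℝ (Fin d)) {t : ℝ} (ht : 0 ≤ t) :
    ‖projV W x‖ ≤ ‖projV W (x + t • (x - projV V x))‖ := by
  have hpV : projV W (projV V x) = projV V x :=
    W.starProjection_eq_self_iff.2 (hVW (projV_mem V x))
  have hnu : projV W (x + t • (x - projV V x))
      = projV W x + t • (projV W x - projV V x) := by
    conv_rhs => rw [← hpV]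
    simp [projV_eq_starProjection]
  have hin : 0 ≤ ⟪projV W x, projV W x - projV V x⟫ := by
    have h1 : ⟪projV W x, projV V x⟫ = ⟪projV V x, projV V x⟫ := by
      rw [inner_projV_left (hVW (projV_mem V x)), inner_projV_left (projV_mem V x)]
    have h2 : ⟪projV W x, projV W x - projV V x⟫
        = ⟪projV W x - projV V x, projV W x - projV V x⟫ := by
      simp only [inner_sub_left, inner_sub_right, real_inner_comm (projV W x) (projV V x)] at *
      linarith
    rw [h2]
    exact real_inner_self_nonneg
  rw [hnu]
  refine (sq_le_sq₀ (norm_nonneg _) (norm_nonneg _)).1 ?_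
  rw [norm_add_sq_real, real_inner_smul_right]
  nlinarith [mul_nonneg ht hin, sq_nonneg ‖t • (projV W x - projV V x)‖]

/-- Adding a direction `θ` to `U` enlarges projections by a factor controlled by the angle
between `θ` and `U`. -/
theorem norm_projV_sup_span_singleton_le {U : Submodule ℝ (EuclideanSpace ℝ (Fin d))}
    {θ y : EuclideanSpace ℝ (Fin d)} {Q b : ℝ}
    (hQ : ‖θ‖ ≤ Q * ‖θ - projV U θ‖) (hθ : θ ∉ U) (hb0 : 0 ≤ b) (hb : |⟪y, θ⟫| ≤ b * ‖θ‖) :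
    ‖projV (U ⊔ span ℝ {θ}) y‖ ≤ 2 * Q * (‖projV U y‖ + b) := by
  set τ := θ - projV U θ with hτ
  have hperp : ∀ u ∈ U, ⟪u, τ⟫ = 0 := fun u hu => by
    rw [real_inner_comm, hτ, inner_sub_left, inner_projV_left hu, sub_self]
  have hθτ : ‖τ‖ ≤ ‖θ‖ := by
    have h1 : ‖θ‖ ^ 2 = ‖projV U θ‖ ^ 2 + ‖τ‖ ^ 2 := by
      have h2 : θ = projV U θ + τ := by rw [hτ]; abel
      conv_lhs => rw [h2]
      rw [norm_add_sq_real, hperp _ (projV_mem U θ)]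
      ring
    exact abs_le_of_sq_le_sq' (by nlinarith [sq_nonneg ‖projV U θ‖]) (norm_nonneg _) |>.2
  have hτ0 : 0 < ‖τ‖ := by
    rw [norm_pos_iff]
    intro h0
    apply hθ
    rw [sub_eq_zero.1 h0]
    exact projV_mem U θ
  have hQ1 : 1 ≤ Q := by
    by_contra! h
    nlinarith
  refine norm_projV_le_of_abs_inner_le (by positivity) fun p hp => ?_
  obtain ⟨u, hu, w, hw, rfl⟩ := Submodule.mem_sup.1 hp
  obtain ⟨c, rfl⟩ := Submodule.mem_span_singleton.1 hw
  set u' := u + c • projV U θ with hu'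
  have hu'U : u' ∈ U := U.add_mem hu (U.smul_mem _ (projV_mem U θ))
  have hp' : u + c • θ = u' + c • τ := by rw [hu', hτ, smul_sub]; abel
  have hsq : ‖u + c • θ‖ ^ 2 = ‖u'‖ ^ 2 + ‖c • τ‖ ^ 2 := by
    rw [hp', norm_add_sq_real, inner_smul_right, hperp _ hu'U]
    ring
  have h1 : ‖u'‖ ≤ ‖u + c • θ‖ :=
    abs_le_of_sq_le_sq' (by nlinarith [sq_nonneg ‖c • τ‖]) (norm_nonneg _) |>.2
  have h2 : ‖c • τ‖ ≤ ‖u + c • θ‖ :=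
    abs_le_of_sq_le_sq' (by nlinarith [sq_nonneg ‖u'‖]) (norm_nonneg _) |>.2
  rw [norm_smul, Real.norm_eq_abs] at h2
  have h3 : |⟪y, u'⟫| ≤ ‖projV U y‖ * ‖u'‖ := abs_inner_le_norm_projV hu'U y
  have h4 : |⟪y, τ⟫| ≤ (b + ‖projV U y‖) * ‖θ‖ := by
    rw [hτ, inner_sub_right]
    have h5 := abs_inner_le_norm_projV (projV_mem U θ) y
    have h6 : ‖projV U θ‖ ≤ ‖θ‖ := U.norm_starProjection_apply_le θ
    calc _ ≤ |⟪y, θ⟫| + |⟪y, projV U θ⟫| := abs_sub _ _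
      _ ≤ b * ‖θ‖ + ‖projV U y‖ * ‖θ‖ := by
        refine add_le_add hb (h5.trans ?_)
        gcongr
      _ = _ := by ring
  have h7 : |c| * ‖θ‖ ≤ Q * ‖u + c • θ‖ := by
    calc |c| * ‖θ‖ ≤ |c| * (Q * ‖τ‖) := by gcongr
      _ = Q * (|c| * ‖τ‖) := by ring
      _ ≤ _ := by gcongr
  rw [hp'] at *
  rw [inner_add_right, real_inner_smul_right]
  calc |⟪y, u'⟫ + c * ⟪y, τ⟫| ≤ |⟪y, u'⟫| + |c| * |⟪y, τ⟫| := by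
        rw [← abs_mul]; exact abs_add_le _ _
    _ ≤ ‖projV U y‖ * ‖u' + c • τ‖ + |c| * ((b + ‖projV U y‖) * ‖θ‖) := by
        refine add_le_add (h3.trans ?_) ?_ <;> gcongr
    _ = ‖projV U y‖ * ‖u' + c • τ‖ + (b + ‖projV U y‖) * (|c| * ‖θ‖) := by ring
    _ ≤ (Q * (b + ‖projV U y‖)) * ‖u' + c • τ‖
        + (b + ‖projV U y‖) * (Q * ‖u' + c • τ‖) := by
        refine add_le_add ?_ (by gcongr)
        have h8 : ‖projV U y‖ ≤ Q * (b + ‖projV U y‖) := by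
          nlinarith [norm_nonneg (projV U y)]
        gcongr
    _ = _ := by ring

/-! ### Lattice subspaces and quantitative angles -/

/-- The determinant of the pairings of `d` vectors with the basis `B`. -/
def pairingDet (B : Basis (Fin d) ℝ (EuclideanSpace ℝ (Fin d))) :
    EuclideanSpace ℝ (Fin d) [⋀^Fin d]→ₗ[ℝ] ℝ :=
  (Matrix.detRowAlternating (n := Fin d) (R := ℝ)).compLinearMap
    (LinearMap.pi fun j => (innerₗ (EuclideanSpace ℝ (Fin d))).flip (B j))

theorem pairingDet_apply (B : Basis (Fin d) ℝ (EuclideanSpace ℝ (Fin d)))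
    (v : Fin d → EuclideanSpace ℝ (Fin d)) :
    pairingDet B v = Matrix.det (Matrix.of fun i j => ⟪v i, B j⟫) := rfl

theorem abs_pairingDet_le (B : Basis (Fin d) ℝ (EuclideanSpace ℝ (Fin d)))
    (v : Fin d → EuclideanSpace ℝ (Fin d)) :
    |pairingDet B v| ≤ (d.factorial * ∏ j, ‖B j‖) * ∏ i, ‖v i‖ := by
  rw [pairingDet_apply, Matrix.det_apply]
  calc _ ≤ ∑ σ : Equiv.Perm (Fin d),
        |Equiv.Perm.sign σ • ∏ i, (Matrix.of fun i j => ⟪v i, B j⟫) (σ i) i| :=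
        Finset.abs_sum_le_sum_abs _ _
    _ ≤ ∑ σ : Equiv.Perm (Fin d), (∏ i, ‖v i‖) * ∏ j, ‖B j‖ := by
        refine Finset.sum_le_sum fun σ _ => ?_
        have h : |Equiv.Perm.sign σ • ∏ i, (Matrix.of fun i j => ⟪v i, B j⟫) (σ i) i|
            = ∏ i, |⟪v (σ i), B i⟫| := by
          rcases Int.units_eq_one_or (Equiv.Perm.sign σ) with h | h <;>
            simp [h, Finset.abs_prod]
        rw [h, ← Equiv.prod_comp σ fun i => ‖v i‖, ← Finset.prod_mul_distrib]
        exact Finset.prod_le_prod (fun _ _ => abs_nonneg _)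
          fun i _ => abs_real_inner_le_norm _ _
    _ = _ := by
        rw [Finset.sum_const, Finset.card_univ, Fintype.card_perm, Fintype.card_fin, nsmul_eq_mul]
        ring

theorem pairingDet_ne_zero (B : Basis (Fin d) ℝ (EuclideanSpace ℝ (Fin d)))
    {v : Fin d → EuclideanSpace ℝ (Fin d)} (hv : span ℝ (range v) = ⊤) :
    pairingDet B v ≠ 0 := by
  rw [pairingDet_apply]
  intro h0
  obtain ⟨x, hx, hMx⟩ := Matrix.exists_mulVec_eq_zero_iff.2 h0
  apply hx
  have hz : ∀ y, ⟪y, ∑ j, x j • B j⟫ = 0 := by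
    intro y
    have hy : y ∈ span ℝ (range v) := hv ▸ Submodule.mem_top
    induction hy using Submodule.span_induction with
    | mem y hy =>
      obtain ⟨i, rfl⟩ := hy
      have := congrFun hMx i
      simp only [Matrix.mulVec, dotProduct, Matrix.of_apply, Pi.zero_apply] at this
      simp only [inner_sum, real_inner_smul_right]
      rw [← this]
      exact Finset.sum_congr rfl fun _ _ => mul_comm _ _
    | zero => simp
    | add a b _ _ ha hb => rw [inner_add_left, ha, hb, add_zero]
    | smul c a _ ha => rw [real_inner_smul_left, ha, mul_zero]
  have hs : ∑ j, x j • B j = 0 := inner_self_eq_zero.1 (hz _)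
  exact funext (Fintype.linearIndependent_iff.1 B.linearIndependent x hs)

theorem one_le_abs_pairingDet (B : Basis (Fin d) ℝ (EuclideanSpace ℝ (Fin d)))
    {v : Fin d → EuclideanSpace ℝ (Fin d)} (hv : span ℝ (range v) = ⊤)
    (hdual : ∀ i, v i ∈ dualLattice B) : 1 ≤ |pairingDet B v| := by
  have hk : ∀ i j, ∃ k : ℤ, ⟪v i, B j⟫ = 2 * Real.pi * k := fun i j =>
    hdual i _ (Submodule.subset_span ⟨j, rfl⟩)
  choose k hk using hk
  have h0 := pairingDet_ne_zero B hv
  have hM : (Matrix.of fun i j => ⟪v i, B j⟫)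
      = (2 * Real.pi) • (Matrix.of k).map (Int.castRingHom ℝ) := by
    ext i j
    simp [hk]
  have hdet : pairingDet B v = (2 * Real.pi) ^ d * ((Matrix.of k).det : ℤ) := by
    rw [pairingDet_apply, hM, Matrix.det_smul, ← RingHom.mapMatrix_apply, ← RingHom.map_det]
    simp
  rw [hdet] at h0 ⊢
  have hk0 : (Matrix.of k).det ≠ 0 := by
    intro h
    simp [h] at h0
  have h1 : (1 : ℝ) ≤ |(((Matrix.of k).det : ℤ) : ℝ)| := by
    rw [← Int.cast_abs]
    exact_mod_cast Int.one_le_abs hk0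
  have hpi : (1 : ℝ) ≤ (2 * Real.pi) ^ d := one_le_pow₀ (by linarith [Real.pi_gt_three])
  rw [abs_mul, abs_of_pos (by positivity)]
  nlinarith

theorem IsLatticeSubspace.sup_span_singleton
    {B : Basis (Fin d) ℝ (EuclideanSpace ℝ (Fin d))} {r : ℝ}
    {U : Submodule ℝ (EuclideanSpace ℝ (Fin d))} (hU : IsLatticeSubspace B r U)
    {θ : EuclideanSpace ℝ (Fin d)} (hθ : θ ∈ Theta0 B r) :
    IsLatticeSubspace B r (U ⊔ span ℝ {θ}) := by
  obtain ⟨S, hS, rfl⟩ := hU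
  exact ⟨S ∪ {θ}, union_subset hS (singleton_subset_iff.2 hθ), (Submodule.span_union _ _).symm⟩

theorem IsLatticeSubspace.exists_mem_theta0_notMem
    {B : Basis (Fin d) ℝ (EuclideanSpace ℝ (Fin d))} {r : ℝ}
    {U V : Submodule ℝ (EuclideanSpace ℝ (Fin d))} (hV : IsLatticeSubspace B r V)
    (h : ¬ V ≤ U) : ∃ θ ∈ Theta0 B r, θ ∈ V ∧ θ ∉ U := by
  obtain ⟨S, hS, rfl⟩ := hV
  obtain ⟨θ, hθS, hθU⟩ := Set.not_subset.1 fun hSU => h (Submodule.span_le.2 hSU)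
  exact ⟨θ, hS hθS, Submodule.subset_span hθS, hθU⟩

theorem finrank_sup_span_singleton_of_notMem
    {U : Submodule ℝ (EuclideanSpace ℝ (Fin d))} {θ : EuclideanSpace ℝ (Fin d)} (hθ : θ ∉ U) :
    finrank ℝ (U ⊔ span ℝ {θ} : Submodule ℝ (EuclideanSpace ℝ (Fin d))) = finrank ℝ U + 1 := by
  have hdisj : U ⊓ span ℝ {θ} = ⊥ := by
    refine (Submodule.eq_bot_iff _).2 fun x hx => ?_
    obtain ⟨c, rfl⟩ := Submodule.mem_span_singleton.1 hx.2
    by_contra hc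
    have hc0 : c ≠ 0 := fun h => hc (by simp [h])
    exact hθ ((U.smul_mem_iff hc0).1 hx.1)
  have h := Submodule.finrank_sup_add_finrank_inf_eq U (span ℝ {θ})
  have hθ0 : θ ≠ 0 := fun h0 => hθ (h0 ▸ U.zero_mem)
  rw [hdisj, finrank_bot, finrank_span_singleton hθ0] at h
  omega

/-- A vector of `Θ_r⁰` outside a lattice `r`-subspace stays quantitatively away from it. -/
theorem one_le_mul_norm_sub_projV (B : Basis (Fin d) ℝ (EuclideanSpace ℝ (Fin d)))
    {r R : ℝ} (hrR : r ≤ R)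
    (hspan : span ℝ (Theta0 B r) = ⊤) {U : Submodule ℝ (EuclideanSpace ℝ (Fin d))}
    (hU : IsLatticeSubspace B r U) {θ : EuclideanSpace ℝ (Fin d)} (hθ : θ ∈ Theta0 B r)
    (hθU : θ ∉ U) :
    1 ≤ (d.factorial * ∏ j, ‖B j‖) * R ^ (d - 1) * ‖θ - projV U θ‖ := by
  obtain ⟨S, hS, rfl⟩ := hU
  obtain ⟨b, hbS, hbspan, hbli⟩ := exists_linearIndependent ℝ S
  rw [← hbspan] at hθU ⊢
  have hli : LinearIndepOn ℝ id (insert θ b) :=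
    LinearIndepOn.insert (v := id) hbli (by simpa using hθU)
  have hsub : insert θ b ⊆ Theta0 B r := Set.insert_subset hθ (hbS.trans hS)
  let e := Basis.extendLe hli hsub hspan.ge
  have hcard : Nat.card (hli.extend hsub) = d := by
    rw [← finrank_eq_nat_card_basis e, finrank_euclideanSpace_fin]
  have : Finite (hli.extend hsub) := Module.Finite.finite_basis e
  let v := e.reindex (Finite.equivFinOfCardEq hcard)
  have hrange : range v = hli.extend hsub := by
    rw [Basis.range_reindex, Basis.range_extendLe]
  have hv : ∀ i, v i ∈ Theta0 B r := fun i =>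
    hli.extend_subset hsub (hrange ▸ mem_range_self i)
  obtain ⟨i₀, hi₀⟩ : θ ∈ range v := hrange ▸ hli.subset_extend hsub (mem_insert _ _)
  have hone := one_le_abs_pairingDet B v.span_eq fun i => (hv i).1
  have hzero : ∀ x ∈ span ℝ b, pairingDet B (Function.update v i₀ x) = 0 := by
    intro x hx
    induction hx using Submodule.span_induction with
    | mem x hx =>
      obtain ⟨j, hj⟩ : x ∈ range v := hrange ▸ hli.subset_extend hsub (mem_insert_of_mem _ hx)
      have hne : i₀ ≠ j := by
        rintro rfl
        exact hθU (Submodule.subset_span (hi₀ ▸ hj ▸ hx))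
      rw [← hj]
      exact (pairingDet B).map_update_self _ hne
    | zero => exact (pairingDet B).map_update_zero _ _
    | add x y _ _ hx hy => rw [(pairingDet B).map_update_add, hx, hy, add_zero]
    | smul c x _ hx => rw [(pairingDet B).map_update_smul, hx, smul_zero]
  have hdet : pairingDet B v
      = pairingDet B (Function.update v i₀ (θ - projV (span ℝ b) θ)) := by
    rw [(pairingDet B).map_update_sub, hzero _ (projV_mem _ θ), sub_zero, ← hi₀,
      Function.update_eq_self]
  rw [hdet] at hone
  refine hone.trans ((abs_pairingDet_le B _).trans ?_)
  rw [mul_assoc _ (R ^ (d - 1))]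
  refine mul_le_mul_of_nonneg_left ?_ (by positivity)
  rw [← Finset.mul_prod_erase _ _ (Finset.mem_univ i₀), Function.update_self, mul_comm]
  refine mul_le_mul_of_nonneg_right ?_ (norm_nonneg _)
  calc ∏ i ∈ Finset.univ.erase i₀,
        ‖Function.update (⇑v) i₀ (θ - projV (span ℝ b) θ) i‖
      ≤ ∏ _i ∈ Finset.univ.erase i₀, R := by
        refine Finset.prod_le_prod (fun _ _ => norm_nonneg _) fun i hi => ?_
        rw [Function.update_of_ne (Finset.ne_of_mem_erase hi)]
        exact (hv i).2.trans hrR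
    _ = R ^ (d - 1) := by
        rw [Finset.prod_const, Finset.card_erase_of_mem (Finset.mem_univ _), Finset.card_univ,
          Fintype.card_fin]

/-- Enlarging a lattice `r`-subspace by one direction from `Θ_r⁰` costs at most a factor `A` in
the size of projections. -/
def ExtensionBound (B : Basis (Fin d) ℝ (EuclideanSpace ℝ (Fin d))) (r A : ℝ) : Prop :=
  ∀ U : Submodule ℝ (EuclideanSpace ℝ (Fin d)), IsLatticeSubspace B r U →
    ∀ θ ∈ Theta0 B r, θ ∉ U → ∀ (y : EuclideanSpace ℝ (Fin d)) (b : ℝ), 0 ≤ b →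
      |⟪y, θ⟫| ≤ b * ‖θ‖ → ‖projV (U ⊔ span ℝ {θ}) y‖ ≤ A * (‖projV U y‖ + b)

theorem extensionBound (B : Basis (Fin d) ℝ (EuclideanSpace ℝ (Fin d))) (hd : 1 ≤ d)
    {r R K : ℝ} (hR : 0 ≤ R) (hrR : r ≤ R) (hspan : span ℝ (Theta0 B r) = ⊤)
    (hK : d.factorial * ∏ j, ‖B j‖ ≤ K) : ExtensionBound B r (2 * (K * R ^ d)) := by
  intro U hU θ hθ hθU y b hb0 hb
  refine norm_projV_sup_span_singleton_le ?_ hθU hb0 hb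
  have h := one_le_mul_norm_sub_projV B hrR hspan hU hθ hθU
  have hpow : R ^ d = R * R ^ (d - 1) := by
    rw [← pow_succ', Nat.sub_add_cancel hd]
  calc ‖θ‖ ≤ R := hθ.2.trans hrR
    _ = R * 1 := (mul_one R).symm
    _ ≤ R * (K * R ^ (d - 1) * ‖θ - projV U θ‖) := by
        gcongr
        exact h.trans (by gcongr)
    _ = _ := by rw [hpow]; ring

/-! ### Resonant chains inside a subspace -/

/-- One step of resonant congruence along a vector of `Θ_r⁰` lying in `U`. -/
def resStepIn (B : Basis (Fin d) ℝ (EuclideanSpace ℝ (Fin d))) (ρ a r : ℝ)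
    (U : Submodule ℝ (EuclideanSpace ℝ (Fin d))) (x y : EuclideanSpace ℝ (Fin d)) : Prop :=
  ∃ θ ∈ Theta0 B r, θ ∈ U ∧ y ∈ upsTheta ρ a θ x

section Chains

variable {B : Basis (Fin d) ℝ (EuclideanSpace ℝ (Fin d))} {ρ a r A : ℝ}
  {U V W : Submodule ℝ (EuclideanSpace ℝ (Fin d))} {x y : EuclideanSpace ℝ (Fin d)}

theorem upsTheta_symm {θ : EuclideanSpace ℝ (Fin d)} (h : y ∈ upsTheta ρ a θ x) :
    x ∈ upsTheta ρ a θ y := by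
  obtain ⟨hx, hy, l, hl⟩ := h
  refine ⟨hy, hx, -l, ?_⟩
  rw [← neg_sub, hl]
  simp

theorem abs_inner_lt_of_mem_upsTheta {θ : EuclideanSpace ℝ (Fin d)} (hθ : θ ≠ 0)
    (h : y ∈ upsTheta ρ a θ x) : |⟪x, θ⟫| < ρ ^ a * ‖θ‖ :=
  h.1.resolve_left hθ

instance symm_resStep : Std.Symm (resStep B ρ a r) where
  symm _ _ := fun ⟨θ, hθ, h⟩ => ⟨θ, hθ, upsTheta_symm h⟩

instance symm_resStepIn : Std.Symm (resStepIn B ρ a r U) where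
  symm _ _ := fun ⟨θ, hθ, hU, h⟩ => ⟨θ, hθ, hU, upsTheta_symm h⟩

theorem Ups_symm (h : y ∈ Ups B ρ a r x) : x ∈ Ups B ρ a r y :=
  ReflTransGen.stdSymm.symm _ _ h

theorem Ups_trans {z : EuclideanSpace ℝ (Fin d)} (hxy : y ∈ Ups B ρ a r x)
    (hyz : z ∈ Ups B ρ a r y) : z ∈ Ups B ρ a r x :=
  ReflTransGen.trans hxy hyz

theorem mem_Ups_of_resStepIn (h : ReflTransGen (resStepIn B ρ a r U) x y) :
    y ∈ Ups B ρ a r x :=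
  h.lift id fun _ _ ⟨θ, hθ, _, h⟩ => ⟨θ, hθ, h⟩

theorem resStepIn_mono (hUW : U ≤ W) (h : ReflTransGen (resStepIn B ρ a r U) x y) :
    ReflTransGen (resStepIn B ρ a r W) x y :=
  h.lift id fun _ _ ⟨θ, hθ, hU, h⟩ => ⟨θ, hθ, hUW hU, h⟩

theorem sub_mem_of_resStepIn (h : ReflTransGen (resStepIn B ρ a r U) x y) : y - x ∈ U := by
  induction h with
  | refl => simp
  | @tail y z _ hyz ih =>
    obtain ⟨θ, _, hθU, _, _, l, hl⟩ := hyz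
    have h : z - x = (y - x) - (l : ℝ) • θ := by rw [← hl]; abel
    rw [h]
    exact U.sub_mem ih (U.smul_mem _ hθU)

/-- Layers of vectors in `V` are invariant under translations orthogonal to `V`. -/
theorem mem_upsTheta_add_iff {θ ν : EuclideanSpace ℝ (Fin d)} (hν : ⟪ν, θ⟫ = 0) :
    y + ν ∈ upsTheta ρ a θ (x + ν) ↔ y ∈ upsTheta ρ a θ x := by
  simp [upsTheta, layer, inner_add_left, hν]

theorem resStepIn_add {ν : EuclideanSpace ℝ (Fin d)} (hν : ∀ u ∈ V, ⟪ν, u⟫ = 0)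
    (h : ReflTransGen (resStepIn B ρ a r V) x y) :
    ReflTransGen (resStepIn B ρ a r V) (x + ν) (y + ν) :=
  h.lift (· + ν) fun _ _ ⟨θ, hθ, hθV, h⟩ =>
    ⟨θ, hθ, hθV, (mem_upsTheta_add_iff (hν θ hθV)).2 h⟩

/-- A chain starting at `x` spans some lattice subspace onto which `x` has a controlled
projection, provided the diameter of chains in lower dimensions is controlled. -/
theorem exists_anchor (hA : ExtensionBound B r A) (hA1 : 1 ≤ A) (hρ : 0 ≤ ρ) {k : ℕ}
    (ih : ∀ j < k, ∀ U : Submodule ℝ (EuclideanSpace ℝ (Fin d)), finrank ℝ U ≤ j →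
      ∀ x y, ReflTransGen (resStepIn B ρ a r U) x y → ‖x - y‖ ≤ 2 * ((6 * A) ^ j * ρ ^ a))
    (hW : finrank ℝ W ≤ k) (h : ReflTransGen (resStepIn B ρ a r W) x y) :
    ∃ U ≤ W, IsLatticeSubspace B r U ∧ ReflTransGen (resStepIn B ρ a r U) x y ∧
      ‖projV U x‖ ≤ (6 * A) ^ finrank ℝ U * ρ ^ a := by
  induction h with
  | refl =>
    refine ⟨⊥, bot_le, ⟨∅, Set.empty_subset _, by simp⟩, .refl, ?_⟩
    rw [projV_eq_starProjection, Submodule.starProjection_bot]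
    simp only [zero_apply, norm_zero]
    positivity
  | @tail y z hxy hyz ihc =>
    obtain ⟨U, hUW, hUlat, hchain, hproj⟩ := ihc
    obtain ⟨θ, hθ, hθW, hstep⟩ := hyz
    by_cases hθU : θ ∈ U
    · exact ⟨U, hUW, hUlat, hchain.tail ⟨θ, hθ, hθU, hstep⟩, hproj⟩
    have hle : U ⊔ span ℝ {θ} ≤ W := sup_le hUW ((span_singleton_le_iff_mem _ _).2 hθW)
    have hfin := finrank_sup_span_singleton_of_notMem hθU
    refine ⟨U ⊔ span ℝ {θ}, hle, hUlat.sup_span_singleton hθ,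
      (resStepIn_mono le_sup_left hchain).tail
        ⟨θ, hθ, mem_sup_right (mem_span_singleton_self θ), hstep⟩, ?_⟩
    have hlt : finrank ℝ U < k := by
      have := Submodule.finrank_mono hle
      omega
    have hdiam := ih _ hlt U le_rfl x y hchain
    have hθ0 : θ ≠ 0 := fun h0 => hθU (h0 ▸ U.zero_mem)
    have hT : 0 ≤ ρ ^ a := by positivity
    have hyU := norm_projV_le_add U y x
    rw [norm_sub_rev] at hyU
    have hy := hA U hUlat θ hθ hθU y (ρ ^ a) hT (abs_inner_lt_of_mem_upsTheta hθ0 hstep).le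
    have hx := norm_projV_le_add (U ⊔ span ℝ {θ}) x y
    rw [hfin, pow_succ]
    set E := (6 * A) ^ finrank ℝ U * ρ ^ a with hE
    have hTE : ρ ^ a ≤ E := le_mul_of_one_le_left hT (one_le_pow₀ (by linarith))
    have hE0 : 0 ≤ E := hT.trans hTE
    calc _ ≤ A * (‖projV U y‖ + ρ ^ a) + ‖x - y‖ := hx.trans (by gcongr)
      _ ≤ A * ((E + 2 * E) + E) + 2 * E := by gcongr; linarith
      _ ≤ A * (4 * E) + A * (2 * E) := by nlinarith
      _ = _ := by rw [hE]; ring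

/-- Resonant chains inside a `k`-dimensional subspace have controlled diameter, regardless of
their length. -/
theorem norm_sub_le_of_resStepIn (hA : ExtensionBound B r A) (hA1 : 1 ≤ A) (hρ : 0 ≤ ρ) (k : ℕ) :
    ∀ U : Submodule ℝ (EuclideanSpace ℝ (Fin d)), finrank ℝ U ≤ k →
      ∀ x y, ReflTransGen (resStepIn B ρ a r U) x y → ‖x - y‖ ≤ 2 * ((6 * A) ^ k * ρ ^ a) := by
  induction k using Nat.strong_induction_on with
  | _ k ih =>
    intro W hW x y h
    obtain ⟨U, hUW, -, hU, hx⟩ := exists_anchor hA hA1 hρ ih hW h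
    obtain ⟨U', hUW', -, hU', hy⟩ := exists_anchor hA hA1 hρ ih hW
      (ReflTransGen.stdSymm.symm _ _ h)
    have hmono : ∀ X ≤ W, (6 * A) ^ finrank ℝ X * ρ ^ a ≤ (6 * A) ^ k * ρ ^ a := fun X hX => by
      have := (Submodule.finrank_mono hX).trans hW
      gcongr
      linarith
    have hxy : x - y ∈ U := by
      rw [← neg_sub]; exact U.neg_mem (sub_mem_of_resStepIn hU)
    have h1 := abs_inner_le_norm_projV hxy x
    have h2 := abs_inner_le_norm_projV (sub_mem_of_resStepIn hU') y
    have hx' := hx.trans (hmono U hUW)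
    have hy' := hy.trans (hmono U' hUW')
    set E := (6 * A) ^ k * ρ ^ a
    have h3 : ‖x - y‖ ^ 2 ≤ 2 * E * ‖x - y‖ := by
      rw [← real_inner_self_eq_norm_sq, inner_sub_left]
      nlinarith [le_abs_self ⟪x, x - y⟫, neg_abs_le ⟪y, x - y⟫, norm_nonneg (x - y)]
    rcases (norm_nonneg (x - y)).eq_or_lt with h0 | h0
    · rw [← h0]
      have : 0 ≤ E := (norm_nonneg _).trans hx'
      linarith
    · nlinarith

end Chains

/-! ### Stability along orthogonal rays -/

section Stability

variable {B : Basis (Fin d) ℝ (EuclideanSpace ℝ (Fin d))} {ρ r A : ℝ} {α : ℕ → ℝ}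
  {U V : Submodule ℝ (EuclideanSpace ℝ (Fin d))} {x y η ξ : EuclideanSpace ℝ (Fin d)}

theorem sub_projV_eq_of_sub_mem (h : y - x ∈ V) : y - projV V y = x - projV V x := by
  have h1 : V.starProjection (y - x) = y - x := V.starProjection_eq_self_iff.2 h
  rw [map_sub] at h1
  rw [projV_eq_starProjection, projV_eq_starProjection, sub_eq_sub_iff_sub_eq_sub]
  exact h1.symm

theorem inner_sub_projV (x : EuclideanSpace ℝ (Fin d)) {u : EuclideanSpace ℝ (Fin d)}
    (hu : u ∈ V) : ⟪x - projV V x, u⟫ = 0 :=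
  V.starProjection_inner_eq_zero x u hu

theorem projV_add_smul_sub_projV (x y : EuclideanSpace ℝ (Fin d)) (t : ℝ) :
    projV V (y + t • (x - projV V x)) = projV V y := by
  have h : V.starProjection (projV V x) = projV V x :=
    V.starProjection_eq_self_iff.2 (projV_mem V x)
  simp only [projV_eq_starProjection] at h ⊢
  simp [h]

theorem Xi2_of_mem_Ups (hx : x ∈ Xi2 B ρ r α U) (h : y ∈ Ups B ρ (α 1) r x) :
    y ∈ Xi2 B ρ r α U := by
  obtain ⟨z, hz, hzx⟩ := hx
  exact ⟨z, hz, Ups_trans hzx h⟩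

theorem notMem_Xi2_of_mem_Xi (h : ξ ∈ Xi B ρ r α V) (hU : IsLatticeSubspace B r U)
    (hVU : finrank ℝ V < finrank ℝ U) : ξ ∉ Xi2 B ρ r α U := fun hξ =>
  h.2 (mem_biUnion (show U ∈ {W | IsLatticeSubspace B r W ∧ finrank ℝ V < finrank ℝ W} from
    ⟨hU, hVU⟩) hξ)

theorem finrank_lt_of_notMem (h : x ∉ U) : finrank ℝ U < d := by
  have h1 := finrank_sup_span_singleton_of_notMem h
  have h2 := Submodule.finrank_le (U ⊔ span ℝ {x})
  rw [finrank_euclideanSpace_fin] at h2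
  omega

/-- Adding one direction `θ ∈ Θ_r⁰` keeps a point inside `Ξ₁`, thanks to the gap between
consecutive exponents. -/
theorem mem_Xi1_sup_span_singleton (hA : ExtensionBound B r A) (hA1 : 1 ≤ A)
    (hρ : 1 ≤ ρ) (hgap : ∀ m < d, (6 * A) ^ d * ρ ^ α m < ρ ^ α (m + 1))
    (hU : IsLatticeSubspace B r U) {θ : EuclideanSpace ℝ (Fin d)} (hθ : θ ∈ Theta0 B r)
    (hθU : θ ∉ U) {b : ℝ} (hb0 : 0 ≤ b) (hb : |⟪y, θ⟫| ≤ b * ‖θ‖)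
    (hsize : ‖projV U y‖ + b ≤ 4 * (6 * A) ^ (d - 1) * ρ ^ α (finrank ℝ U)) :
    y ∈ Xi1 ρ α (U ⊔ span ℝ {θ}) := by
  have hlt := finrank_lt_of_notMem hθU
  change ‖_‖ < _
  rw [finrank_sup_span_singleton_of_notMem hθU]
  refine lt_of_le_of_lt ?_ (hgap _ hlt)
  have hpow : (6 * A) ^ d = (6 * A) ^ (d - 1) * (6 * A) := by
    rw [← pow_succ, Nat.sub_add_cancel (by omega)]
  have hX : 0 ≤ A * ((6 * A) ^ (d - 1) * ρ ^ α (finrank ℝ U)) := by positivity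
  calc _ ≤ A * (‖projV U y‖ + b) := hA U hU θ hθ hθU y b hb0 hb
    _ ≤ A * (4 * (6 * A) ^ (d - 1) * ρ ^ α (finrank ℝ U)) := by gcongr
    _ ≤ _ := by rw [hpow]; linarith

theorem mem_Xi1_span_singleton {θ : EuclideanSpace ℝ (Fin d)} (hθ : θ ≠ 0)
    (h : |⟪y, θ⟫| < ρ ^ α 1 * ‖θ‖) : y ∈ Xi1 ρ α (span ℝ {θ}) := by
  have hθ' : 0 < ‖θ‖ := norm_pos_iff.2 hθ
  change ‖_‖ < _
  rw [finrank_span_singleton hθ]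
  refine lt_of_le_of_lt (norm_projV_le_of_abs_inner_le (M := |⟪y, θ⟫| / ‖θ‖) (by positivity)
    fun u hu => ?_) ((div_lt_iff₀ hθ').2 h)
  obtain ⟨c, rfl⟩ := mem_span_singleton.1 hu
  rw [real_inner_smul_right, abs_mul, norm_smul, Real.norm_eq_abs]
  exact le_of_eq (by field_simp)

theorem norm_projV_le_of_resStepIn (hA : ExtensionBound B r A) (hA1 : 1 ≤ A) (hρ : 1 ≤ ρ)
    (hmono : ∀ m k, k ≤ m → m ≤ d → ρ ^ α k ≤ ρ ^ α m)
    (hη : η ∈ Xi1 ρ α V) (hV0 : 1 ≤ finrank ℝ V) (hVd : finrank ℝ V < d)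
    (h : ReflTransGen (resStepIn B ρ (α 1) r V) η x) :
    ‖projV V x‖ ≤ 3 * (6 * A) ^ (d - 1) * ρ ^ α (finrank ℝ V) := by
  have h1 := norm_sub_le_of_resStepIn hA hA1 (by linarith) (d - 1) V (by omega) η x h
  have h2 := norm_projV_le_add V x η
  rw [norm_sub_rev] at h2
  have h3 : ‖projV V η‖ < ρ ^ α (finrank ℝ V) := hη
  have h4 := hmono _ _ hV0 hVd.le
  have hP : 1 ≤ (6 * A) ^ (d - 1) := one_le_pow₀ (by linarith)
  have hT : 0 ≤ ρ ^ α (finrank ℝ V) := by positivity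
  calc _ ≤ ρ ^ α (finrank ℝ V) + 2 * ((6 * A) ^ (d - 1) * ρ ^ α 1) := by linarith
    _ ≤ (6 * A) ^ (d - 1) * ρ ^ α (finrank ℝ V)
        + 2 * ((6 * A) ^ (d - 1) * ρ ^ α (finrank ℝ V)) := by
        gcongr
        exact le_mul_of_one_le_left hT hP
    _ = _ := by ring

/-- If the class of `η ∈ Ξ₁(V)` avoids the zones of larger dimension, then resonant chains
starting on the ray from `η` orthogonal to `V` only use vectors of `V`. -/
theorem resStepIn_of_mem_Ups_perp_ray (hA : ExtensionBound B r A) (hA1 : 1 ≤ A) (hρ : 1 ≤ ρ)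
    (hmono : ∀ m k, k ≤ m → m ≤ d → ρ ^ α k ≤ ρ ^ α m)
    (hgap : ∀ m < d, (6 * A) ^ d * ρ ^ α m < ρ ^ α (m + 1))
    (hV : IsLatticeSubspace B r V) (hη : η ∈ Xi1 ρ α V)
    (hnot : ∀ U, IsLatticeSubspace B r U → finrank ℝ V < finrank ℝ U → η ∉ Xi2 B ρ r α U)
    {t : ℝ} (ht : 0 ≤ t) (h : y ∈ Ups B ρ (α 1) r (η + t • (η - projV V η))) :
    ReflTransGen (resStepIn B ρ (α 1) r V) η (y - t • (η - projV V η)) := by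
  induction h with
  | refl => rw [add_sub_cancel_right]
  | @tail y z _ hyz ih =>
    obtain ⟨θ, hθ, hstep⟩ := hyz
    set ν := t • (η - projV V η) with hν
    by_cases hθV : θ ∈ V
    · refine ih.tail ⟨θ, hθ, hθV, ?_⟩
      rw [← mem_upsTheta_add_iff (ν := ν), sub_add_cancel, sub_add_cancel]
      · exact hstep
      · rw [hν, real_inner_smul_left, inner_sub_projV η hθV, mul_zero]
    exfalso
    have hθ0 : θ ≠ 0 := fun h0 => hθV (h0 ▸ V.zero_mem)
    have hlayer := abs_inner_lt_of_mem_upsTheta hθ0 hstep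
    have hlt := finrank_lt_of_notMem hθV
    have hνx : t • ((y - ν) - projV V (y - ν)) = ν := by
      rw [sub_projV_eq_of_sub_mem (sub_mem_of_resStepIn ih)]
    have hyXi : y ∈ Xi1 ρ α (V ⊔ span ℝ {θ}) := by
      rcases Nat.eq_zero_or_pos (finrank ℝ V) with h0 | h0
      · rw [Submodule.finrank_eq_zero.1 h0, bot_sup_eq]
        exact mem_Xi1_span_singleton hθ0 hlayer
      · refine mem_Xi1_sup_span_singleton hA hA1 hρ hgap hV hθ hθV (by positivity) hlayer.le ?_
        have h1 := norm_projV_le_of_resStepIn hA hA1 hρ hmono hη h0 hlt ih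
        have h2 : projV V y = projV V (y - ν) := by
          rw [← projV_add_smul_sub_projV η (y - ν) t, ← hν, sub_add_cancel]
        have h3 := hmono _ _ h0 hlt.le
        have hP : 1 ≤ (6 * A) ^ (d - 1) := one_le_pow₀ (by linarith)
        have hT : 0 ≤ ρ ^ α (finrank ℝ V) := by positivity
        rw [h2]
        nlinarith
    have hx : y - ν ∈ Xi1 ρ α (V ⊔ span ℝ {θ}) := by
      change ‖_‖ < _
      refine lt_of_le_of_lt ?_ (show ‖projV (V ⊔ span ℝ {θ}) y‖ < _ from hyXi)
      have h1 := norm_projV_le_of_perp_ray (le_sup_left : V ≤ V ⊔ span ℝ {θ}) (y - ν) ht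
      rwa [hνx, sub_add_cancel] at h1
    refine hnot _ (hV.sup_span_singleton hθ) ?_ ⟨_, hx, Ups_symm (mem_Ups_of_resStepIn ih)⟩
    rw [finrank_sup_span_singleton_of_notMem hθV]
    exact Nat.lt_succ_self _

/-- A point lying in `Ξ₁(U)` with small projection onto `V` lies in `Ξ₁(U')` for some lattice
subspace `U'` containing `V`. -/
theorem exists_mem_Xi1_of_small_projV (hA : ExtensionBound B r A) (hA1 : 1 ≤ A) (hρ : 1 ≤ ρ)
    (hmono : ∀ m k, k ≤ m → m ≤ d → ρ ^ α k ≤ ρ ^ α m)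
    (hgap : ∀ m < d, (6 * A) ^ d * ρ ^ α m < ρ ^ α (m + 1))
    (hV : IsLatticeSubspace B r V)
    (hsmall : 1 ≤ finrank ℝ V → finrank ℝ V < d →
      ‖projV V y‖ ≤ 3 * (6 * A) ^ (d - 1) * ρ ^ α (finrank ℝ V)) (k : ℕ) :
    ∀ U, IsLatticeSubspace B r U → d - finrank ℝ U = k → finrank ℝ V < finrank ℝ U →
      y ∈ Xi1 ρ α U → ∃ U', IsLatticeSubspace B r U' ∧ V ≤ U' ∧ finrank ℝ V < finrank ℝ U' ∧
        y ∈ Xi1 ρ α U' := by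
  induction k using Nat.strong_induction_on with
  | _ k ih =>
    intro U hU hk hVU hy
    by_cases hle : V ≤ U
    · exact ⟨U, hU, hle, hVU, hy⟩
    obtain ⟨θ, hθ, hθV, hθU⟩ := hV.exists_mem_theta0_notMem hle
    have hlt := finrank_lt_of_notMem hθU
    have hfin := finrank_sup_span_singleton_of_notMem hθU
    refine ih (d - finrank ℝ (U ⊔ span ℝ {θ} : Submodule ℝ (EuclideanSpace ℝ (Fin d))))
      (by omega) _ (hU.sup_span_singleton hθ) rfl (by omega) ?_
    have hV0 : 1 ≤ finrank ℝ V := by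
      by_contra! h0
      refine hle ?_
      rw [Submodule.finrank_eq_zero.1 (Nat.lt_one_iff.1 h0)]
      exact bot_le
    refine mem_Xi1_sup_span_singleton hA hA1 hρ hgap hU hθ hθU (norm_nonneg _)
      (abs_inner_le_norm_projV hθV y) ?_
    have h1 := hsmall hV0 (by omega)
    have h2 : ‖projV U y‖ < ρ ^ α (finrank ℝ U) := hy
    have h3 := hmono _ _ hVU.le hlt.le
    have hP : 1 ≤ (6 * A) ^ (d - 1) := one_le_pow₀ (by linarith)
    have hT : 0 ≤ ρ ^ α (finrank ℝ U) := by positivity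
    have h4 : 3 * (6 * A) ^ (d - 1) * ρ ^ α (finrank ℝ V)
        ≤ 3 * (6 * A) ^ (d - 1) * ρ ^ α (finrank ℝ U) := by gcongr
    nlinarith

theorem Xi_add_smul_mem (hA : ExtensionBound B r A) (hA1 : 1 ≤ A) (hρ : 1 ≤ ρ)
    (hmono : ∀ m k, k ≤ m → m ≤ d → ρ ^ α k ≤ ρ ^ α m)
    (hgap : ∀ m < d, (6 * A) ^ d * ρ ^ α m < ρ ^ α (m + 1))
    (hV : IsLatticeSubspace B r V) (hξ : ξ ∈ Xi B ρ r α V) {t : ℝ} (ht : 0 ≤ t) :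
    ξ + t • (ξ - projV V ξ) ∈ Xi B ρ r α V := by
  obtain ⟨η, hη, hηξ⟩ := hξ.1
  have hnot : ∀ U, IsLatticeSubspace B r U → finrank ℝ V < finrank ℝ U →
      η ∉ Xi2 B ρ r α U := fun U hU hVU hηU =>
    notMem_Xi2_of_mem_Xi hξ hU hVU (Xi2_of_mem_Ups hηU hηξ)
  have hchain : ReflTransGen (resStepIn B ρ (α 1) r V) η ξ := by
    have h := resStepIn_of_mem_Ups_perp_ray (y := ξ) hA hA1 hρ hmono hgap hV hη hnot le_rfl
      (by simpa using hηξ)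
    simpa using h
  rw [sub_projV_eq_of_sub_mem (sub_mem_of_resStepIn hchain)]
  have hshift := mem_Ups_of_resStepIn (resStepIn_add (ν := t • (η - projV V η))
    (fun u hu => by rw [real_inner_smul_left, inner_sub_projV η hu, mul_zero]) hchain)
  refine ⟨⟨η + t • (η - projV V η), ?_, hshift⟩, ?_⟩
  · change ‖_‖ < _
    rw [projV_add_smul_sub_projV]
    exact hη
  intro hmem
  obtain ⟨W, ⟨hW, hVW⟩, ζ, hζ, hζξ⟩ := mem_iUnion₂.1 hmem
  have hηζ := resStepIn_of_mem_Ups_perp_ray hA hA1 hρ hmono hgap hV hη hnot ht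
    (Ups_trans hshift (Ups_symm hζξ))
  set ν := t • (η - projV V η) with hν
  have hprojζ : projV V ζ = projV V (ζ - ν) := by
    rw [← projV_add_smul_sub_projV η (ζ - ν) t, ← hν, sub_add_cancel]
  obtain ⟨U, hU, hVU, hfin, hζU⟩ := exists_mem_Xi1_of_small_projV (y := ζ) hA hA1 hρ hmono hgap hV
    (fun h0 hlt => hprojζ ▸ norm_projV_le_of_resStepIn hA hA1 hρ hmono hη h0 hlt hηζ)
    _ W hW rfl hVW hζ
  have hx : ζ - ν ∈ Xi1 ρ α U := by
    change ‖_‖ < _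
    refine lt_of_le_of_lt ?_ (show ‖projV U ζ‖ < _ from hζU)
    have h1 := norm_projV_le_of_perp_ray hVU (ζ - ν) ht
    rwa [sub_projV_eq_of_sub_mem (sub_mem_of_resStepIn hηζ), ← hν, sub_add_cancel] at h1
  exact hnot U hU hfin ⟨_, hx, Ups_symm (mem_Ups_of_resStepIn hηζ)⟩

end Stability

/-- Lemma 5.20: for sufficiently large ρ, if ξ ∈ Ξ(V) and ν = ξ_{V^⊥},
then ξ + tν ∈ Ξ(V) for all t ≥ 0. -/
theorem Xi_stable_along_perp_ray
    (d : ℕ) (hd : 2 ≤ d) (B : Basis (Fin d) ℝ (EuclideanSpace ℝ (Fin d)))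
    (κ : ℝ) (α : ℕ → ℝ) :
    ∃ ρ₀ : ℝ, ∀ ρ r : ℝ, ρ₀ ≤ ρ → GoodParams B ρ r κ α →
      ∀ n : ℕ, n ≤ d →
      ∀ V : Submodule ℝ (EuclideanSpace ℝ (Fin d)), IsLatticeSubspace B r V →
        Module.finrank ℝ V = n →
      ∀ ξ ∈ Xi B ρ r α V,
      ∀ t : ℝ, 0 ≤ t →
        ξ + t • (ξ - projV V ξ) ∈ Xi B ρ r α V := by
  set K : ℝ := max 1 (d.factorial * ∏ j, ‖B j‖)
  by_cases hκ : 0 < κ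
  swap
  · exact ⟨0, fun _ _ _ hG => absurd hG.2.1 hκ⟩
  have hlim : Filter.Tendsto (fun ρ : ℝ => ρ ^ (κ * (d : ℝ) ^ 2)) Filter.atTop Filter.atTop :=
    tendsto_rpow_atTop (by positivity)
  obtain ⟨ρ₀, hρ₀⟩ := Filter.eventually_atTop.1 (hlim.eventually_gt_atTop ((12 * K) ^ d))
  refine ⟨ρ₀, fun ρ r hρ hG n hn V hV hVn ξ hξ t ht => ?_⟩
  have hbig := hρ₀ ρ hρ
  obtain ⟨hρ1, -, -, hα, -, hr, hspan⟩ := hG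
  have hρ0 : 0 < ρ := by linarith
  set R := ρ ^ κ with hR
  have hR1 : 1 ≤ R := Real.one_le_rpow hρ1 hκ.le
  have hK1 : 1 ≤ K := le_max_left _ _
  have hmono : ∀ m, m ≤ d → ∀ k ≤ m, α k ≤ α m := by
    intro m
    induction m with
    | zero => intro _ k hk; rw [Nat.le_zero.1 hk]
    | succ m ih =>
      intro hm k hk
      rcases Nat.of_le_succ hk with hk | rfl
      · have h1 := ih (by omega) k hk
        have h2 := hα m (by omega)
        have h3 : 0 ≤ 2 * κ * (d : ℝ) ^ 2 := by positivity
        linarith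
      · exact le_rfl
  refine Xi_add_smul_mem (A := 2 * (K * R ^ d)) (extensionBound B (by omega) (by linarith) hr
    hspan (le_max_right _ _)) ?_ hρ1 ?_ ?_ hV hξ ht
  · have : 1 ≤ K * R ^ d := one_le_mul_of_one_le_of_one_le hK1 (one_le_pow₀ hR1)
    linarith
  · intro m k hkm hm
    exact Real.rpow_le_rpow_of_exponent_le hρ1 (hmono m hm k hkm)
  · intro m hm
    have hRpow : (R ^ d) ^ d = ρ ^ (κ * (d : ℝ) ^ 2) := by
      rw [hR, ← pow_mul, ← Real.rpow_natCast, ← Real.rpow_mul hρ0.le]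
      push_cast
      ring_nf
    calc (6 * (2 * (K * R ^ d))) ^ d * ρ ^ α m
        = (12 * K) ^ d * ρ ^ (κ * (d : ℝ) ^ 2) * ρ ^ α m := by
          rw [← hRpow, ← mul_pow]; ring_nf
      _ < ρ ^ (κ * (d : ℝ) ^ 2) * ρ ^ (κ * (d : ℝ) ^ 2) * ρ ^ α m := by gcongr
      _ = ρ ^ (α m + 2 * κ * (d : ℝ) ^ 2) := by
          rw [← Real.rpow_add hρ0, ← Real.rpow_add hρ0]; ring_nf
      _ ≤ ρ ^ α (m + 1) := Real.rpow_le_rpow_of_exponent_le hρ1 (hα m hm).le
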